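/- arXiv:2410.20209 — 2 statements merged into one kernel-verified Lean document; each statement's English description precedes it below -/
import Mathlib

section
/- Let d ≥ 3 and ℓ ≥ 1 be integers. For all x ∈ [−1,1], the d-dimensional Legendre polynomials satisfy 1 − P_{2ℓ}(x) ≤ (λ_{2ℓ}/λ_2) · (1 − P_2(x)), where λ_k = k(k + d − 2). -/
open MeasureTheory

/-- The constant ω_p = 2π^((p+1)/2) / Γ((p+1)/2). -/
noncomputable def omegaConst (p : ℝ) : ℝ :=
  2 * Real.pi ^ ((p + 1) / 2) / Real.Gamma ((p + 1) / 2)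

/-- The d-dimensional Legendre polynomial of order n, normalized so that P_n(1) = 1,
given by the integral representation
P_n(x) = (ω_{d−3}/ω_{d−2}) ∫_{−1}^{1} Re((x + i s √(1−x²))^n) (1−s²)^((d−4)/2) ds. -/
noncomputable def legendreP (d : ℕ) (n : ℕ) (x : ℝ) : ℝ :=
  (omegaConst ((d : ℝ) - 3) / omegaConst ((d : ℝ) - 2)) *
    ∫ s in (-1 : ℝ)..1,
      (((x : ℂ) + Complex.I * (s : ℂ) * (Real.sqrt (1 - x ^ 2) : ℂ)) ^ n).re *
        (1 - s ^ 2) ^ (((d : ℝ) - 4) / 2)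

/-- The eigenvalue λ_k = k(k + d − 2) of the (minus) spherical Laplacian on S^{d−1}. -/
noncomputable def lambdaEig (d k : ℕ) : ℝ := (k : ℝ) * ((k : ℝ) + (d : ℝ) - 2)

/-! The Laplace integral writes `P_n(x)` as a probability average, over `s ∈ [-1, 1]`, of
`Re z ^ n` with `z = x + i s √(1 - x²)`, a point of the closed unit disc. For such `z`
one has `|Im z ^ n| ≤ n |Im z|`, and the Bernoulli inequality gives
`1 - ‖z ^ n‖² ≤ n (1 - ‖z‖²)`, so
`1 - Re z ^ (2 n) = 1 - ‖z ^ n‖² + 2 (Im z ^ n)² ≤ n (1 - ‖z‖²) + 2 n² (Im z)²`, with equality for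
`n = 1`. The right-hand side is quadratic in `s` and averages to `λ_{2n} (1 - x²) / (2 (d - 1))`. -/

section UnitDisc

lemma abs_im_pow_le {z : ℂ} (hz : ‖z‖ ≤ 1) (n : ℕ) : |(z ^ n).im| ≤ n * |z.im| := by
  induction n with
  | zero => simp
  | succ k ih =>
    have re_pow_le : |(z ^ k).re| ≤ 1 :=
      (Complex.abs_re_le_norm _).trans (norm_pow z k ▸ pow_le_one₀ (norm_nonneg z) hz)
    have re_le : |z.re| ≤ 1 := (Complex.abs_re_le_norm z).trans hz
    calc |(z ^ (k + 1)).im| = |(z ^ k).re * z.im + (z ^ k).im * z.re| := by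
          rw [pow_succ, Complex.mul_im]
      _ ≤ |(z ^ k).re| * |z.im| + |(z ^ k).im| * |z.re| := by
          simpa only [abs_mul] using abs_add_le ((z ^ k).re * z.im) ((z ^ k).im * z.re)
      _ ≤ 1 * |z.im| + k * |z.im| * 1 := by gcongr
      _ = (k + 1 : ℕ) * |z.im| := by push_cast; ring

lemma re_sq_eq_norm_sq_sub (z : ℂ) : (z ^ 2).re = ‖z‖ ^ 2 - 2 * z.im ^ 2 := by
  rw [← Complex.sq_norm_sub_sq_re, pow_two z, Complex.mul_re]
  linear_combination Complex.sq_norm_sub_sq_re z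

lemma one_sub_re_pow_two_mul_le {z : ℂ} (hz : ‖z‖ ≤ 1) (n : ℕ) :
    1 - (z ^ (2 * n)).re ≤ n * (1 - ‖z‖ ^ 2) + 2 * n ^ 2 * z.im ^ 2 := by
  have bernoulli : 1 - n * (1 - ‖z‖ ^ 2) ≤ ‖z ^ n‖ ^ 2 := by
    have := one_add_mul_le_pow (a := ‖z‖ ^ 2 - 1) (by linarith [sq_nonneg ‖z‖]) n
    rw [add_sub_cancel, ← pow_mul, mul_comm 2 n, pow_mul, ← norm_pow z n] at this
    linarith
  have im_sq_le : (z ^ n).im ^ 2 ≤ n ^ 2 * z.im ^ 2 := by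
    simpa only [mul_pow, sq_abs] using pow_le_pow_left₀ (abs_nonneg _) (abs_im_pow_le hz n) 2
  rw [pow_mul', re_sq_eq_norm_sq_sub]
  linarith

end UnitDisc

section BetaIntegral

variable {a b : ℝ}

lemma ofReal_rpow_mul_one_sub_rpow {u : ℝ} (hu : u ∈ Set.Icc (0 : ℝ) 1) :
    ((u ^ (a - 1) * (1 - u) ^ (b - 1) : ℝ) : ℂ) =
      (u : ℂ) ^ ((a : ℂ) - 1) * (1 - (u : ℂ)) ^ ((b : ℂ) - 1) := by
  rw [Complex.ofReal_mul, Complex.ofReal_cpow hu.1, Complex.ofReal_cpow (sub_nonneg.2 hu.2)]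
  push_cast
  rfl

lemma intervalIntegrable_rpow_mul_one_sub_rpow (ha : 0 < a) (hb : 0 < b) :
    IntervalIntegrable (fun u : ℝ => u ^ (a - 1) * (1 - u) ^ (b - 1)) volume 0 1 := by
  have complex_integrable :=
    Complex.betaIntegral_convergent (u := (a : ℂ)) (v := (b : ℂ)) (by simpa) (by simpa)
  rw [intervalIntegrable_iff_integrableOn_Ioc_of_le zero_le_one] at complex_integrable ⊢
  refine IntegrableOn.congr_fun (Integrable.re complex_integrable) (fun u hu => ?_)
    measurableSet_Ioc
  simp only [← ofReal_rpow_mul_one_sub_rpow (Set.Ioc_subset_Icc_self hu), RCLike.re_to_complex,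
    Complex.ofReal_re]

lemma integral_rpow_mul_one_sub_rpow (ha : 0 < a) (hb : 0 < b) :
    ∫ u in (0 : ℝ)..1, u ^ (a - 1) * (1 - u) ^ (b - 1) = ProbabilityTheory.beta a b := by
  rw [ProbabilityTheory.beta_eq_betaIntegralReal a b ha hb, Complex.betaIntegral,
    ← intervalIntegral.integral_congr (fun u hu => ofReal_rpow_mul_one_sub_rpow
      (by rwa [Set.uIcc_of_le zero_le_one] at hu)),
    intervalIntegral.integral_ofReal, Complex.ofReal_re]

end BetaIntegral

section SymmetricWeight

variable {r : ℝ}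

lemma one_sub_sq_nonneg {s : ℝ} (hs : s ∈ Set.Icc (-1 : ℝ) 1) : 0 ≤ 1 - s ^ 2 := by
  nlinarith [hs.1, hs.2]

lemma one_sub_sq_rpow_eq (r : ℝ) {s : ℝ} (hs : s ∈ Set.Icc (-1 : ℝ) 1) :
    (1 - s ^ 2) ^ r =
      4 ^ r * ((1 / 2 * s + 1 / 2) ^ r * (1 - (1 / 2 * s + 1 / 2)) ^ r) := by
  have left_nonneg : 0 ≤ 1 / 2 * s + 1 / 2 := by linarith [hs.1]
  have right_nonneg : 0 ≤ 1 - (1 / 2 * s + 1 / 2) := by linarith [hs.2]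
  rw [← Real.mul_rpow left_nonneg right_nonneg,
    ← Real.mul_rpow (by norm_num) (mul_nonneg left_nonneg right_nonneg)]
  congr 1
  ring

lemma intervalIntegrable_one_sub_sq_rpow (hr : -1 < r) :
    IntervalIntegrable (fun s : ℝ => (1 - s ^ 2) ^ r) volume (-1) 1 := by
  have beta_integrable :=
    intervalIntegrable_rpow_mul_one_sub_rpow (a := r + 1) (b := r + 1) (by linarith) (by linarith)
  simp only [add_sub_cancel_right] at beta_integrable
  have substituted := ((beta_integrable.comp_add_right (1 / 2)).comp_mul_left
    (c := 1 / 2)).const_mul (4 ^ r)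
  norm_num only at substituted
  refine substituted.congr (fun s hs => ?_)
  rw [Set.uIoc_of_le (by norm_num)] at hs
  exact (one_sub_sq_rpow_eq r (Set.Ioc_subset_Icc_self hs)).symm

lemma integral_one_sub_sq_rpow (hr : -1 < r) :
    ∫ s in (-1 : ℝ)..1, (1 - s ^ 2) ^ r =
      √Real.pi * Real.Gamma (r + 1) / Real.Gamma (r + 3 / 2) := by
  have beta_eq : ∫ s in (-1 : ℝ)..1, (1 - s ^ 2) ^ r =
      4 ^ r * 2 * (Real.Gamma (r + 1) ^ 2 / Real.Gamma (2 * (r + 1))) := by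
    have beta_integral :=
      integral_rpow_mul_one_sub_rpow (a := r + 1) (b := r + 1) (by linarith) (by linarith)
    simp only [add_sub_cancel_right] at beta_integral
    rw [intervalIntegral.integral_congr (fun s hs => one_sub_sq_rpow_eq r
        (by rwa [Set.uIcc_of_le (by norm_num)] at hs)), intervalIntegral.integral_const_mul,
      intervalIntegral.integral_comp_mul_add (fun u : ℝ => u ^ r * (1 - u) ^ r)
        (by norm_num : (1 / 2 : ℝ) ≠ 0)]
    norm_num only
    rw [beta_integral, ProbabilityTheory.beta, smul_eq_mul]
    ring_nf
  have duplication := Real.Gamma_mul_Gamma_add_half (r + 1)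
  rw [show r + 1 + 1 / 2 = r + 3 / 2 by ring] at duplication
  have pow_cancel : (4 : ℝ) ^ r * 2 * 2 ^ (1 - 2 * (r + 1)) = 1 := by
    rw [show (4 : ℝ) = 2 ^ (2 : ℝ) by norm_num, ← Real.rpow_mul (by norm_num),
      ← Real.rpow_add_one (by norm_num), ← Real.rpow_add (by norm_num),
      show 2 * r + 1 + (1 - 2 * (r + 1)) = 0 by ring, Real.rpow_zero]
  have Gamma_half_ne := (Real.Gamma_pos_of_pos (show 0 < r + 3 / 2 by linarith)).ne'
  have Gamma_two_ne := (Real.Gamma_pos_of_pos (show 0 < 2 * (r + 1) by linarith)).ne'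
  rw [beta_eq, ← mul_div_assoc, div_eq_div_iff Gamma_two_ne Gamma_half_ne]
  linear_combination (4 ^ r * 2 * Real.Gamma (r + 1)) * duplication +
    (Real.Gamma (r + 1) * Real.Gamma (2 * (r + 1)) * √Real.pi) * pow_cancel

lemma integral_one_sub_sq_rpow_add_one (hr : -1 < r) :
    ∫ s in (-1 : ℝ)..1, (1 - s ^ 2) ^ (r + 1) =
      (r + 1) / (r + 3 / 2) * ∫ s in (-1 : ℝ)..1, (1 - s ^ 2) ^ r := by
  rw [integral_one_sub_sq_rpow hr, integral_one_sub_sq_rpow (by linarith),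
    Real.Gamma_add_one (show r + 1 ≠ 0 by linarith), add_right_comm r 1,
    Real.Gamma_add_one (show r + 3 / 2 ≠ 0 by linarith), mul_left_comm, mul_div_mul_comm]

end SymmetricWeight

section OmegaConst

variable {p : ℝ}

lemma omegaConst_pos (hp : -1 < p) : 0 < omegaConst p := by
  have Gamma_pos := Real.Gamma_pos_of_pos (show 0 < (p + 1) / 2 by linarith)
  unfold omegaConst
  positivity

/-- For `p : ℕ`, `omegaConst p` is the area of the unit sphere `S^p`, and this is the area of
`S^(p+1)` computed by slicing with parallel hyperplanes. -/
lemma omegaConst_add_one (hp : -1 < p) :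
    omegaConst (p + 1) = omegaConst p * ∫ s in (-1 : ℝ)..1, (1 - s ^ 2) ^ ((p - 1) / 2) := by
  have Gamma_ne := (Real.Gamma_pos_of_pos (show 0 < (p + 1) / 2 by linarith)).ne'
  rw [integral_one_sub_sq_rpow (by linarith), omegaConst, omegaConst,
    show (p - 1) / 2 + 1 = (p + 1) / 2 by ring,
    show (p - 1) / 2 + 3 / 2 = (p + 1) / 2 + 1 / 2 by ring,
    show (p + 1 + 1) / 2 = (p + 1) / 2 + 1 / 2 by ring,
    Real.rpow_add Real.pi_pos, ← Real.sqrt_eq_rpow]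
  field_simp

end OmegaConst

/-- The average over `[-1, 1]` in the Laplace integral that defines `legendreP d`, for a real
dimension `d`. It is a probability average when `2 < d`; for `d ≤ 2` the weight is not
integrable. -/
noncomputable def laplaceMean (d : ℝ) (f : ℝ → ℝ) : ℝ :=
  omegaConst (d - 3) / omegaConst (d - 2) *
    ∫ s in (-1 : ℝ)..1, f s * (1 - s ^ 2) ^ ((d - 4) / 2)

section LaplaceMean

variable {d : ℝ} {f g : ℝ → ℝ}

lemma laplaceMean_const_mul (c : ℝ) (f : ℝ → ℝ) :
    laplaceMean d (fun s => c * f s) = c * laplaceMean d f := by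
  simp only [laplaceMean, mul_assoc c, intervalIntegral.integral_const_mul]
  ring

lemma intervalIntegrable_mul_weight (hd : 2 < d) (hf : ContinuousOn f (Set.Icc (-1) 1)) :
    IntervalIntegrable (fun s => f s * (1 - s ^ 2) ^ ((d - 4) / 2)) volume (-1) 1 :=
  (intervalIntegrable_one_sub_sq_rpow (by linarith)).continuousOn_mul
    (by rwa [Set.uIcc_of_le (by norm_num)])

lemma laplaceMean_sub (hd : 2 < d) (hf : ContinuousOn f (Set.Icc (-1) 1))
    (hg : ContinuousOn g (Set.Icc (-1) 1)) :
    laplaceMean d (fun s => f s - g s) = laplaceMean d f - laplaceMean d g := by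
  simp only [laplaceMean, sub_mul]
  rw [intervalIntegral.integral_sub (intervalIntegrable_mul_weight hd hf)
    (intervalIntegrable_mul_weight hd hg), mul_sub]

lemma laplaceMean_mono (hd : 2 < d) (hf : ContinuousOn f (Set.Icc (-1) 1))
    (hg : ContinuousOn g (Set.Icc (-1) 1)) (hfg : ∀ s ∈ Set.Icc (-1 : ℝ) 1, f s ≤ g s) :
    laplaceMean d f ≤ laplaceMean d g := by
  refine mul_le_mul_of_nonneg_left ?_
    (div_pos (omegaConst_pos (by linarith)) (omegaConst_pos (by linarith))).le
  refine intervalIntegral.integral_mono_on (by norm_num) (intervalIntegrable_mul_weight hd hf)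
    (intervalIntegrable_mul_weight hd hg) fun s hs => ?_
  exact mul_le_mul_of_nonneg_right (hfg s hs) (Real.rpow_nonneg (one_sub_sq_nonneg hs) _)

lemma laplaceMean_one (hd : 2 < d) : laplaceMean d (fun _ => 1) = 1 := by
  have slicing := omegaConst_add_one (p := d - 3) (by linarith)
  rw [show d - 3 + 1 = d - 2 by ring, show (d - 3 - 1) / 2 = (d - 4) / 2 by ring] at slicing
  simp only [laplaceMean, one_mul]
  rw [div_mul_eq_mul_div, ← slicing, div_self (omegaConst_pos (by linarith)).ne']

lemma laplaceMean_one_sub_sq (hd : 2 < d) :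
    laplaceMean d (fun s => 1 - s ^ 2) = (d - 2) / (d - 1) := by
  have weight_shift : ∫ s in (-1 : ℝ)..1, (1 - s ^ 2) * (1 - s ^ 2) ^ ((d - 4) / 2) =
      ∫ s in (-1 : ℝ)..1, (1 - s ^ 2) ^ ((d - 4) / 2 + 1) := by
    refine intervalIntegral.integral_congr fun s hs => ?_
    rw [Set.uIcc_of_le (by norm_num)] at hs
    simp only [Real.rpow_add_one' (one_sub_sq_nonneg hs)
      (show (d - 4) / 2 + 1 ≠ 0 by linarith), mul_comm]
  calc laplaceMean d (fun s => 1 - s ^ 2)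
      = ((d - 4) / 2 + 1) / ((d - 4) / 2 + 3 / 2) * laplaceMean d (fun _ => 1) := by
        simp only [laplaceMean, weight_shift, one_mul]
        rw [integral_one_sub_sq_rpow_add_one (by linarith), mul_left_comm]
    _ = (d - 2) / (d - 1) := by
        rw [laplaceMean_one hd, mul_one, ← mul_div_mul_right _ _ (two_ne_zero : (2 : ℝ) ≠ 0)]
        ring_nf

lemma laplaceMean_const_sub_mul_one_sub_sq (hd : 2 < d) (a b : ℝ) :
    laplaceMean d (fun s => a - b * (1 - s ^ 2)) = a - b * ((d - 2) / (d - 1)) := by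
  have const_eq : laplaceMean d (fun _ => a) = a := by
    simpa only [mul_one, laplaceMean_one hd] using laplaceMean_const_mul (d := d) a (fun _ => 1)
  rw [laplaceMean_sub hd (by fun_prop) (by fun_prop), const_eq, laplaceMean_const_mul,
    laplaceMean_one_sub_sq hd]

end LaplaceMean

/-- The complex number `x + i s √(1 - x²)` whose powers are averaged in the Laplace integral
defining `legendreP`. -/
noncomputable def laplacePoint (x s : ℝ) : ℂ :=
  (x : ℂ) + Complex.I * (s : ℂ) * (Real.sqrt (1 - x ^ 2) : ℂ)

section LaplacePoint

variable {x s : ℝ}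

@[fun_prop]
lemma continuous_laplacePoint (x : ℝ) : Continuous (laplacePoint x) := by
  unfold laplacePoint
  fun_prop

lemma continuous_re_laplacePoint_pow (x : ℝ) (n : ℕ) :
    Continuous fun s => (laplacePoint x s ^ n).re :=
  Complex.continuous_re.comp (by fun_prop)

lemma im_laplacePoint_sq (hx : x ∈ Set.Icc (-1 : ℝ) 1) (s : ℝ) :
    (laplacePoint x s).im ^ 2 = s ^ 2 * (1 - x ^ 2) := by
  simp [laplacePoint, mul_pow, Real.sq_sqrt (one_sub_sq_nonneg hx)]

lemma one_sub_norm_laplacePoint_sq (hx : x ∈ Set.Icc (-1 : ℝ) 1) (s : ℝ) :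
    1 - ‖laplacePoint x s‖ ^ 2 = (1 - s ^ 2) * (1 - x ^ 2) := by
  have re_eq : (laplacePoint x s).re = x := by simp [laplacePoint]
  have norm_sq := Complex.sq_norm_sub_sq_re (laplacePoint x s)
  rw [re_eq, im_laplacePoint_sq hx] at norm_sq
  linear_combination -norm_sq

lemma norm_laplacePoint_le_one (hx : x ∈ Set.Icc (-1 : ℝ) 1) (hs : s ∈ Set.Icc (-1 : ℝ) 1) :
    ‖laplacePoint x s‖ ≤ 1 := by
  have := mul_nonneg (one_sub_sq_nonneg hs) (one_sub_sq_nonneg hx)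
  rw [← one_sub_norm_laplacePoint_sq hx] at this
  exact (sq_le_one_iff₀ (norm_nonneg _)).1 (sub_nonneg.1 this)

end LaplacePoint

section Legendre

variable {d : ℕ} {x : ℝ}

lemma one_sub_legendreP (hd : 3 ≤ d) (n : ℕ) (x : ℝ) :
    1 - legendreP d n x = laplaceMean d (fun s => 1 - (laplacePoint x s ^ n).re) := by
  have hd' : (2 : ℝ) < d := by exact_mod_cast hd
  rw [laplaceMean_sub hd' (by fun_prop) (continuous_re_laplacePoint_pow x n).continuousOn,
    laplaceMean_one hd']
  rfl

lemma laplaceMean_one_sub_norm_sq_add_im_sq (hd : 3 ≤ d) (hx : x ∈ Set.Icc (-1 : ℝ) 1) (n : ℕ) :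
    laplaceMean d (fun s => n * (1 - ‖laplacePoint x s‖ ^ 2) +
      2 * n ^ 2 * (laplacePoint x s).im ^ 2) =
      lambdaEig d (2 * n) / (2 * (d - 1)) * (1 - x ^ 2) := by
  have hd' : (2 : ℝ) < d := by exact_mod_cast hd
  have d_sub_one_ne : (d : ℝ) - 1 ≠ 0 := by linarith
  have quadratic : ∀ s, n * (1 - ‖laplacePoint x s‖ ^ 2) +
      2 * n ^ 2 * (laplacePoint x s).im ^ 2 =
      2 * n ^ 2 * (1 - x ^ 2) - (2 * n ^ 2 - n) * (1 - x ^ 2) * (1 - s ^ 2) := fun s => by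
    rw [one_sub_norm_laplacePoint_sq hx, im_laplacePoint_sq hx]
    ring
  simp only [quadratic]
  rw [laplaceMean_const_sub_mul_one_sub_sq hd', lambdaEig]
  push_cast
  field_simp
  ring

lemma one_sub_legendreP_two_mul_le (hd : 3 ≤ d) (hx : x ∈ Set.Icc (-1 : ℝ) 1) (n : ℕ) :
    1 - legendreP d (2 * n) x ≤ lambdaEig d (2 * n) / (2 * (d - 1)) * (1 - x ^ 2) := by
  rw [one_sub_legendreP hd, ← laplaceMean_one_sub_norm_sq_add_im_sq hd hx]
  refine laplaceMean_mono (by exact_mod_cast hd) ?_ ?_ fun s hs =>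
    one_sub_re_pow_two_mul_le (norm_laplacePoint_le_one hx hs) n
  · exact (continuous_const.sub (continuous_re_laplacePoint_pow x (2 * n))).continuousOn
  · have := Complex.continuous_im.comp (continuous_laplacePoint x)
    fun_prop

lemma one_sub_legendreP_two (hd : 3 ≤ d) (hx : x ∈ Set.Icc (-1 : ℝ) 1) :
    1 - legendreP d 2 x = lambdaEig d 2 / (2 * (d - 1)) * (1 - x ^ 2) := by
  have average := laplaceMean_one_sub_norm_sq_add_im_sq hd hx 1
  rw [mul_one] at average
  rw [one_sub_legendreP hd, ← average]
  congr 1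
  ext s
  rw [re_sq_eq_norm_sq_sub]
  push_cast
  ring

lemma lambdaEig_pos {k : ℕ} (hd : 2 ≤ d) (hk : 0 < k) : 0 < lambdaEig d k := by
  have hd' : (2 : ℝ) ≤ d := by exact_mod_cast hd
  have hk' : (0 : ℝ) < k := by exact_mod_cast hk
  exact mul_pos hk' (by linarith)

end Legendre

theorem legendre_imbert_silvestre_villani
    (d ℓ : ℕ) (hd : 3 ≤ d) (hℓ : 1 ≤ ℓ) (x : ℝ) (hx : x ∈ Set.Icc (-1 : ℝ) 1) :
    1 - legendreP d (2 * ℓ) x ≤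
      (lambdaEig d (2 * ℓ) / lambdaEig d 2) * (1 - legendreP d 2 x) := by
  have lambda_two_ne : lambdaEig d 2 ≠ 0 := (lambdaEig_pos (by omega) two_pos).ne'
  calc 1 - legendreP d (2 * ℓ) x
      ≤ lambdaEig d (2 * ℓ) / (2 * (d - 1)) * (1 - x ^ 2) := one_sub_legendreP_two_mul_le hd hx ℓ
    _ = lambdaEig d (2 * ℓ) / lambdaEig d 2 * (lambdaEig d 2 / (2 * (d - 1)) * (1 - x ^ 2)) := by
        field_simp
    _ = lambdaEig d (2 * ℓ) / lambdaEig d 2 * (1 - legendreP d 2 x) := by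
        rw [one_sub_legendreP_two hd hx]
end

section
/- Let ℓ ≥ 1 be an integer and let x, s ∈ [−1, 1]. Define F(s, x) = Re((x + i s √(1−x²))^{2ℓ} − (x + i s √(1−x²))^{2(ℓ+1)}). Then F(s, x) ≤ (4ℓ + 2) s² (1 − x²) + (1 − x²)(1 − s²). -/
/-!
Multiplying `z = conj z + 2 i Im z` by `z ^ (n + 1)` gives
`z ^ (n + 2) = ‖z‖² z ^ n + 2 i Im z · z ^ (n + 1)`, hence
`Re (z ^ n - z ^ (n + 2)) = (1 - ‖z‖²) Re (z ^ n) + 2 Im z · Im (z ^ (n + 1))`.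
In the closed unit disc the first term is at most `1 - ‖z‖²`, and the second at most
`2 (n + 1) (Im z)²` because `|Im (z ^ (n + 1))| ≤ (n + 1) |Im z|`.
The point `z = x + i s √(1 - x²)` has `(Im z)² = s² (1 - x²)` and
`1 - ‖z‖² = (1 - x²) (1 - s²)`.
-/

open scoped ComplexConjugate

section Powers

variable (z : ℂ) (n : ℕ)

theorem re_pow_le_norm_pow : (z ^ n).re ≤ ‖z‖ ^ n :=
  (Complex.re_le_norm _).trans_eq (norm_pow z n)

theorem abs_im_pow_succ_le : |(z ^ (n + 1)).im| ≤ (n + 1) * ‖z‖ ^ n * |z.im| := by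
  induction n with
  | zero => simp
  | succ k ih =>
    have re_bound : |(z ^ (k + 1)).re| ≤ ‖z‖ ^ (k + 1) :=
      (Complex.abs_re_le_norm _).trans_eq (norm_pow z (k + 1))
    calc |(z ^ (k + 1 + 1)).im|
        = |(z ^ (k + 1)).re * z.im + (z ^ (k + 1)).im * z.re| := by
          rw [pow_succ z (k + 1), Complex.mul_im]
      _ ≤ |(z ^ (k + 1)).re| * |z.im| + |(z ^ (k + 1)).im| * |z.re| := by
          simpa only [abs_mul] using abs_add_le ((z ^ (k + 1)).re * z.im) ((z ^ (k + 1)).im * z.re)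
      _ ≤ ‖z‖ ^ (k + 1) * |z.im| + (k + 1) * ‖z‖ ^ k * |z.im| * ‖z‖ := by
          gcongr
          exact Complex.abs_re_le_norm z
      _ = ((k + 1 : ℕ) + 1) * ‖z‖ ^ (k + 1) * |z.im| := by
          push_cast
          ring

theorem im_mul_im_pow_succ_le :
    z.im * (z ^ (n + 1)).im ≤ (n + 1) * ‖z‖ ^ n * z.im ^ 2 :=
  calc z.im * (z ^ (n + 1)).im
      ≤ |z.im| * |(z ^ (n + 1)).im| := (le_abs_self _).trans_eq (abs_mul _ _)
    _ ≤ |z.im| * ((n + 1) * ‖z‖ ^ n * |z.im|) := by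
        gcongr
        exact abs_im_pow_succ_le z n
    _ = (n + 1) * ‖z‖ ^ n * z.im ^ 2 := by
        rw [← sq_abs z.im]
        ring

theorem pow_add_two_eq_norm_sq_mul_add :
    z ^ (n + 2) = (‖z‖ ^ 2 : ℝ) * z ^ n + (2 * z.im : ℝ) * Complex.I * z ^ (n + 1) := by
  have norm_sq : ((‖z‖ ^ 2 : ℝ) : ℂ) = z * conj z := by
    rw [Complex.mul_conj, Complex.normSq_eq_norm_sq]
  rw [norm_sq, ← Complex.sub_conj]
  ring

theorem re_pow_sub_pow_add_two :
    (z ^ n - z ^ (n + 2)).re =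
      (1 - ‖z‖ ^ 2) * (z ^ n).re + 2 * (z.im * (z ^ (n + 1)).im) := by
  rw [pow_add_two_eq_norm_sq_mul_add, mul_assoc]
  simp only [Complex.sub_re, Complex.add_re, Complex.re_ofReal_mul, Complex.I_mul_re]
  ring

variable {z} in
theorem re_pow_sub_pow_add_two_le_norm_pow_mul (hz : ‖z‖ ≤ 1) :
    (z ^ n - z ^ (n + 2)).re ≤
      ‖z‖ ^ n * (2 * (n + 1) * z.im ^ 2 + (1 - ‖z‖ ^ 2)) := by
  have defect_nonneg : 0 ≤ 1 - ‖z‖ ^ 2 := sub_nonneg.2 (pow_le_one₀ (norm_nonneg z) hz)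
  calc (z ^ n - z ^ (n + 2)).re
      = (1 - ‖z‖ ^ 2) * (z ^ n).re + 2 * (z.im * (z ^ (n + 1)).im) :=
        re_pow_sub_pow_add_two z n
    _ ≤ (1 - ‖z‖ ^ 2) * ‖z‖ ^ n + 2 * ((n + 1) * ‖z‖ ^ n * z.im ^ 2) := by
        gcongr (1 - ‖z‖ ^ 2) * ?_ + 2 * ?_
        · exact re_pow_le_norm_pow z n
        · exact im_mul_im_pow_succ_le z n
    _ = ‖z‖ ^ n * (2 * (n + 1) * z.im ^ 2 + (1 - ‖z‖ ^ 2)) := by ring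

variable {z} in
theorem re_pow_sub_pow_add_two_le (hz : ‖z‖ ≤ 1) :
    (z ^ n - z ^ (n + 2)).re ≤ 2 * (n + 1) * z.im ^ 2 + (1 - ‖z‖ ^ 2) := by
  have defect_nonneg : 0 ≤ 1 - ‖z‖ ^ 2 := sub_nonneg.2 (pow_le_one₀ (norm_nonneg z) hz)
  exact (re_pow_sub_pow_add_two_le_norm_pow_mul n hz).trans
    (mul_le_of_le_one_left (by positivity) (pow_le_one₀ (norm_nonneg z) hz))

end Powers

theorem re_pow_diff_simple_bound (ℓ : ℕ) (hℓ : 1 ≤ ℓ) (x s : ℝ)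
    (hx : x ∈ Set.Icc (-1 : ℝ) 1) (hs : s ∈ Set.Icc (-1 : ℝ) 1) :
    ((((x : ℂ) + Complex.I * (s : ℂ) * (Real.sqrt (1 - x ^ 2) : ℂ)) ^ (2 * ℓ) -
        ((x : ℂ) + Complex.I * (s : ℂ) * (Real.sqrt (1 - x ^ 2) : ℂ)) ^ (2 * (ℓ + 1))).re) ≤
      (4 * (ℓ : ℝ) + 2) * s ^ 2 * (1 - x ^ 2) + (1 - x ^ 2) * (1 - s ^ 2) := by
  have hx_sq : 0 ≤ 1 - x ^ 2 := sub_nonneg.2 ((sq_le_one_iff_abs_le_one x).2 (abs_le.2 hx))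
  have hs_sq : 0 ≤ 1 - s ^ 2 := sub_nonneg.2 ((sq_le_one_iff_abs_le_one s).2 (abs_le.2 hs))
  set z : ℂ := (x : ℂ) + Complex.I * (s : ℂ) * (Real.sqrt (1 - x ^ 2) : ℂ) with z_def
  have re_eq : z.re = x := by simp [z_def]
  have im_sq : z.im ^ 2 = s ^ 2 * (1 - x ^ 2) := by
    simp [z_def, mul_pow, Real.sq_sqrt hx_sq]
  have one_sub_norm_sq : 1 - ‖z‖ ^ 2 = (1 - x ^ 2) * (1 - s ^ 2) := by
    linear_combination -Complex.sq_norm_sub_sq_re z - im_sq - (z.re + x) * re_eq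
  have norm_le_one : ‖z‖ ≤ 1 := by
    rw [← sq_le_one_iff₀ (norm_nonneg z), ← sub_nonneg, one_sub_norm_sq]
    exact mul_nonneg hx_sq hs_sq
  calc (z ^ (2 * ℓ) - z ^ (2 * (ℓ + 1))).re
      ≤ 2 * ((2 * ℓ : ℕ) + 1) * z.im ^ 2 + (1 - ‖z‖ ^ 2) :=
        re_pow_sub_pow_add_two_le (2 * ℓ) norm_le_one
    _ = (4 * ℓ + 2) * s ^ 2 * (1 - x ^ 2) + (1 - x ^ 2) * (1 - s ^ 2) := by
        rw [im_sq, one_sub_norm_sq]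
        push_cast
        ring
end
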